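/- arXiv:1811.01740 — 6 statements merged into one kernel-verified Lean document; each statement's English description precedes it below -/
import Mathlib

section
/- Let N ≥ 1 and let t be any list of memory blocks. For every block x: x belongs to lruRun N [] t if and only if t can be written as t = t₁ ++ [x] ++ t₂ where x does not occur in t₂ and the number of distinct blocks occurring in t₂ is at most N − 1 (i.e. t₂.toFinset.card ≤ N − 1). -/
/-- One access to an LRU cache of associativity `N`: rejuvenate on a hit,
append on a miss, evicting the oldest block if the cache is full. -/
def lruAccess {B : Type*} [DecidableEq B] (N : ℕ) (w : List B) (a : B) : List B :=
  if a ∈ w then w.erase a ++ [a]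
  else if w.length < N then w ++ [a]
  else w.tail ++ [a]

/-- Process a list of accesses in order, starting from state `w`. -/
def lruRun {B : Type*} [DecidableEq B] (N : ℕ) (w t : List B) : List B :=
  t.foldl (lruAccess N) w

theorem lru_dedup_snoc {B : Type*} [DecidableEq B] (t : List B) (a : B) :
    (t ++ [a]).dedup = t.dedup.erase a ++ [a] := by
  induction t with
  | nil => simp
  | cons b t ih =>
    rw [List.cons_append]
    by_cases hb : b ∈ t
    · rw [List.dedup_cons_of_mem (by simp [hb]), List.dedup_cons_of_mem hb, ih]
    · rw [List.dedup_cons_of_notMem hb]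
      by_cases hba : b = a
      · subst hba
        rw [List.dedup_cons_of_mem (by simp), ih, List.erase_cons_head,
          List.erase_of_not_mem (by simpa using hb)]
      · rw [List.dedup_cons_of_notMem (by simp [hb, hba]), ih,
          List.erase_cons_tail (by simpa using hba), List.cons_append]

theorem lru_inv {B : Type*} [DecidableEq B] (N : ℕ) (hN : 1 ≤ N) (t : List B) :
    ∃ K, t.dedup = K ++ lruRun N [] t ∧ (lruRun N [] t).length ≤ N ∧
      (K ≠ [] → (lruRun N [] t).length = N) := by
  induction t using List.reverseRecOn with
  | nil => exact ⟨[], by simp [lruRun]⟩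
  | append_singleton t a ih =>
    obtain ⟨K, h1, h2, h3⟩ := ih
    have hr : lruRun N [] (t ++ [a]) = lruAccess N (lruRun N [] t) a := by
      simp [lruRun]
    rw [hr, lru_dedup_snoc, h1]
    have hnd : (K ++ lruRun N [] t).Nodup := h1 ▸ List.nodup_dedup t
    generalize lruRun N [] t = W at *
    unfold lruAccess
    by_cases haW : a ∈ W
    · have haK : a ∉ K := fun h => (List.disjoint_of_nodup_append hnd) h haW
      have hl : (W.erase a ++ [a]).length = W.length := by
        have := List.length_pos_of_mem haW
        simp [List.length_erase_of_mem haW]; omega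
      rw [if_pos haW]
      exact ⟨K, by rw [List.erase_append_right _ haK, List.append_assoc], by omega,
        fun h => by rw [hl, h3 h]⟩
    · rw [if_neg haW]
      by_cases hlt : W.length < N
      · have hK : K = [] := by
          by_contra h
          have := h3 h
          omega
        subst hK
        rw [if_pos hlt]
        exact ⟨[], by simp [List.erase_of_not_mem haW], by simp; omega, by simp⟩
      · rw [if_neg hlt]
        cases W with
        | nil => simp at hlt; omega
        | cons h W =>
          simp only [List.length_cons] at h2 hlt
          refine ⟨K.erase a ++ [h], ?_, by simp; omega, fun _ => by simp; omega⟩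
          by_cases haK : a ∈ K
          · rw [List.erase_append_left _ haK]; simp
          · rw [List.erase_of_not_mem haK, List.erase_of_not_mem (by simp_all)]; simp

theorem lru_dedup_split {B : Type*} [DecidableEq B] (t₁ t₂ : List B) (x : B) (hx : x ∉ t₂) :
    ∃ A, (t₁ ++ [x] ++ t₂).dedup = A ++ x :: t₂.dedup := by
  obtain ⟨A, hA⟩ := List.suffix_union_right t₁ (x :: t₂.dedup)
  refine ⟨A, ?_⟩
  rw [hA, List.append_assoc, List.dedup_append, List.singleton_append,
    List.dedup_cons_of_notMem hx]

theorem lru_last {B : Type*} [DecidableEq B] (t : List B) (x : B) (hx : x ∈ t) :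
    ∃ t₁ t₂ : List B, t = t₁ ++ [x] ++ t₂ ∧ x ∉ t₂ := by
  induction t with
  | nil => simp at hx
  | cons b t ih =>
    by_cases h : x ∈ t
    · obtain ⟨p, q, rfl, hq⟩ := ih h
      exact ⟨b :: p, q, by simp, hq⟩
    · obtain rfl : x = b := by simpa [h] using hx
      exact ⟨[], t, by simp, h⟩

theorem lru_mem_iff_aux {B : Type*} [DecidableEq B] (N : ℕ) (hN : 1 ≤ N)
    (t₁ t₂ : List B) (x : B) (hx : x ∉ t₂) :
    x ∈ lruRun N ([] : List B) (t₁ ++ [x] ++ t₂) ↔ t₂.toFinset.card ≤ N - 1 := by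
  obtain ⟨K, h1, h2, h3⟩ := lru_inv N hN (t₁ ++ [x] ++ t₂)
  obtain ⟨A, hA⟩ := lru_dedup_split t₁ t₂ x hx
  have hnd := List.nodup_dedup (t₁ ++ [x] ++ t₂)
  generalize lruRun N [] (t₁ ++ [x] ++ t₂) = W at *
  rw [List.card_toFinset]
  have hxd : x ∉ t₂.dedup := by simpa using hx
  rw [h1] at hA hnd
  generalize t₂.dedup = C at *
  rcases List.append_eq_append_iff.1 hA with ⟨E, rfl, rfl⟩ | ⟨E, rfl, hE⟩
  · simp at h2 ⊢
    omega
  · cases E with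
    | nil =>
      simp only [List.nil_append] at hE
      subst hE
      simp at h2 ⊢
      omega
    | cons e E =>
      simp only [List.cons_append, List.cons.injEq] at hE
      obtain ⟨rfl, rfl⟩ := hE
      have hW : x ∉ W := fun h => hxd (by simp [h])
      have := h3 (by simp)
      simp [hW]
      omega

/-- a block `x` is in the LRU cache after running trace `t` from
the empty cache iff `x` occurs in `t` and at most `N - 1` distinct blocks are
accessed after the last access to `x`. -/
theorem lru_mem_iff {B : Type*} [DecidableEq B] (N : ℕ) (hN : 1 ≤ N)
    (t : List B) (x : B) :
    x ∈ lruRun N ([] : List B) t ↔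
      ∃ t₁ t₂ : List B, t = t₁ ++ [x] ++ t₂ ∧ x ∉ t₂ ∧ t₂.toFinset.card ≤ N - 1 := by
  constructor
  · intro h
    obtain ⟨K, h1, -, -⟩ := lru_inv N hN t
    have hxt : x ∈ t := by
      rw [← List.mem_dedup, h1]
      simp [h]
    obtain ⟨t₁, t₂, rfl, hx⟩ := lru_last t x hxt
    exact ⟨t₁, t₂, rfl, hx, (lru_mem_iff_aux N hN t₁ t₂ x hx).1 h⟩
  · rintro ⟨t₁, t₂, rfl, hx, hc⟩
    exact (lru_mem_iff_aux N hN t₁ t₂ x hx).2 hc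
end

section
/- Let n m : ℕ and let C : Fin m → Finset (Fin n × Bool) be a CNF formula over n Boolean variables, where clause j is the set of literals C j and a literal (i,b) is satisfied by a valuation v : Fin n → Bool iff v i = b. Work over the block type consisting of a distinguished block X together with blocks L(i,b) for (i,b) ∈ Fin n × Bool. Then the following are equivalent: (1) there is a valuation v : Fin n → Bool such that every clause C j contains a literal satisfied by v; (2) there exist f : Fin n → Bool and g : Fin m → Fin n × Bool with g j ∈ C j for every j, such that X ∈ lruRun (n+1) [] (X :: (List.ofFn (fun i => L(i, f i)) ++ List.ofFn (fun j => L(g j)))). (This is the correctness of the reduction from CNF-SAT to the LRU exist-hit problem: the access traces in (2) are exactly the traces through the constructed acyclic control-flow graph.) -/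
theorem lruRun_notMem {B : Type*} [DecidableEq B] (N : ℕ) (x : B) (t : List B) :
    ∀ w : List B, x ∉ w → x ∉ t → x ∉ lruRun N w t := by
  induction t with
  | nil => intro w hw _; simpa [lruRun] using hw
  | cons a t ih =>
    intro w hw ht
    simp only [List.mem_cons, not_or] at ht
    refine ih (lruAccess N w a) ?_ ht.2
    unfold lruAccess
    have h1 : x ∉ w.erase a := fun h => hw (List.mem_of_mem_erase h)
    have h2 : x ∉ w.tail := fun h => hw (List.mem_of_mem_tail h)
    split_ifs <;> simp [h1, h2, hw, ht.1]

theorem lruRun_fill {B : Type*} [DecidableEq B] (N : ℕ) (t : List B) :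
    ∀ w : List B, (w ++ t).Nodup → (w ++ t).length ≤ N → lruRun N w t = w ++ t := by
  induction t with
  | nil => intro w _ _; simp [lruRun]
  | cons a t ih =>
    intro w hn hl
    have ha : a ∉ w := by
      intro h
      exact (List.nodup_append.1 hn).2.2 a h a (by simp) rfl
    have hlt : w.length < N := by
      simp at hl; omega
    have e : lruAccess N w a = w ++ [a] := by simp [lruAccess, ha, hlt]
    have := ih (w ++ [a]) (by simpa using hn) (by simpa using hl)
    change lruRun N (lruAccess N w a) t = _
    rw [e, this]; simp

theorem lruRun_keep {B : Type*} [DecidableEq B] (N : ℕ) (x : B) (t : List B) :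
    ∀ s : List B, x ∉ s → x ∉ t → s.length + 1 = N →
      (x ∈ lruRun N (x :: s) t ↔ ∀ a ∈ t, a ∈ s) := by
  induction t with
  | nil => intro s _ _ _; simp [lruRun]
  | cons a t ih =>
    intro s hs ht hl
    simp only [List.mem_cons, not_or] at ht
    change x ∈ lruRun N (lruAccess N (x :: s) a) t ↔ _
    by_cases ha : a ∈ s
    · have e : lruAccess N (x :: s) a = x :: (s.erase a ++ [a]) := by
        simp [lruAccess, ha, List.erase_cons, ht.1]
      have p : (s.erase a ++ [a]).Perm s :=
        (List.perm_append_singleton a _).trans (List.perm_cons_erase ha).symm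
      rw [e, ih _ (fun h => hs (p.mem_iff.1 h)) ht.2 (by rw [p.length_eq]; exact hl)]
      simp only [p.mem_iff, List.forall_mem_cons, ha, true_and]
    · have e : lruAccess N (x :: s) a = s ++ [a] := by
        simp [lruAccess, ha, Ne.symm ht.1, ← hl]
      rw [e]
      constructor
      · intro h
        exact absurd h (lruRun_notMem N x t _ (by simp [hs, ht.1]) ht.2)
      · intro h
        exact absurd (h a (by simp)) ha

theorem lruRun_reduction {n m : ℕ} (f : Fin n → Bool) (g : Fin m → Fin n × Bool) :
    (none : Option (Fin n × Bool)) ∈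
        lruRun (n + 1) ([] : List (Option (Fin n × Bool)))
          (none :: (List.ofFn (fun i : Fin n => some (i, f i)) ++
                    List.ofFn (fun j : Fin m => some (g j)))) ↔
      ∀ j, f (g j).1 = (g j).2 := by
  have h1 := lruRun_fill (n + 1)
    (none :: List.ofFn (fun i : Fin n => some (i, f i))) [] (by
      rw [List.nil_append, List.nodup_cons, List.nodup_ofFn]
      refine ⟨by simp [List.mem_ofFn], ?_⟩
      intro a b h
      simp at h
      exact h.1) (by simp)
  rw [← List.cons_append]
  unfold lruRun at h1 ⊢
  rw [List.foldl_append, h1, List.nil_append]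
  have h2 := lruRun_keep (n + 1) none (List.ofFn (fun j : Fin m => some (g j)))
    (List.ofFn (fun i : Fin n => some (i, f i))) (by simp [List.mem_ofFn])
    (by simp [List.mem_ofFn]) (by simp)
  unfold lruRun at h2
  rw [h2]
  simp [List.mem_ofFn, Prod.ext_iff]

/-- correctness of the reduction from CNF-SAT to the LRU exist-hit
problem.  Blocks are `Option (Fin n × Bool)`: `none` is the distinguished block
`X` and `some (i, b)` is the block `L(i,b)`. -/
theorem lru_exist_hit_sat_reduction (n m : ℕ) (C : Fin m → Finset (Fin n × Bool)) :
    (∃ v : Fin n → Bool, ∀ j : Fin m, ∃ l ∈ C j, v l.1 = l.2) ↔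
    (∃ (f : Fin n → Bool) (g : Fin m → Fin n × Bool),
      (∀ j : Fin m, g j ∈ C j) ∧
      (none : Option (Fin n × Bool)) ∈
        lruRun (n + 1) ([] : List (Option (Fin n × Bool)))
          (none :: (List.ofFn (fun i : Fin n => some (i, f i)) ++
                    List.ofFn (fun j : Fin m => some (g j))))) := by
  simp only [lruRun_reduction]
  constructor
  · rintro ⟨v, hv⟩
    choose g hg hs using hv
    exact ⟨v, g, hg, hs⟩
  · rintro ⟨f, g, hg, hs⟩
    exact ⟨f, fun j => ⟨g j, hg j, hs j⟩⟩
end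

section
/- Let V be a finite type, B a type of blocks, E : V → B → V → Prop an edge-labeled directed multigraph, S F : V, N : ℕ, and x : B. If there is a walk from S to F with trace t such that x ∈ lruRun N [] t, then there is a walk from S to F with trace t' such that t'.length ≤ 2 * Fintype.card V and x ∈ lruRun N [] t'. (Hence the LRU exist-hit problem remains in NP even for cyclic control-flow graphs.) -/
/-- `Walk E u v t`: there is a walk from `u` to `v` in the edge-labeled directed
multigraph `E` whose list of edge labels, in order, is `t`. -/
inductive Walk {V B : Type*} (E : V → B → V → Prop) : V → V → List B → Prop
  | nil (v : V) : Walk E v v []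
  | cons {u v w : V} {b : B} {t : List B} :
      E u b v → Walk E v w t → Walk E u w (b :: t)

inductive PWalk {V B : Type*} (E : V → B → V → Prop) : V → V → List B → List V → Prop
  | nil (v : V) : PWalk E v v [] [v]
  | cons {u v w : V} {b : B} {t : List B} {l : List V} :
      E u b v → PWalk E v w t l → PWalk E u w (b :: t) (u :: l)

theorem PWalk.toWalk {V B : Type*} {E : V → B → V → Prop} {u v : V} {t : List B} {l : List V}
    (h : PWalk E u v t l) : Walk E u v t ∧ l.length = t.length + 1 := by
  induction h with
  | nil v => exact ⟨Walk.nil v, rfl⟩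
  | cons e _ ih => exact ⟨Walk.cons e ih.1, by simp [ih.2]⟩

theorem PWalk.suffix {V B : Type*} {E : V → B → V → Prop} {a v w : V} {t : List B} {l : List V}
    (h : PWalk E v w t l) (ha : a ∈ l) :
    ∃ t' l', PWalk E a w t' l' ∧ l' <:+ l ∧ t' ⊆ t := by
  induction h with
  | nil v =>
    obtain rfl : a = v := by simpa using ha
    exact ⟨_, _, PWalk.nil a, List.suffix_rfl, List.Subset.refl _⟩
  | @cons u v w b t l e h ih =>
    rcases List.mem_cons.1 ha with rfl | ha
    · exact ⟨_, _, PWalk.cons e h, List.suffix_rfl, List.Subset.refl _⟩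
    · obtain ⟨t', l', h1, h2, h3⟩ := ih ha
      exact ⟨t', l', h1, h2.trans (List.suffix_cons _ _), fun y hy => List.mem_cons_of_mem _ (h3 hy)⟩

theorem Walk.toPath {V B : Type*} {E : V → B → V → Prop} {u v : V} {t : List B}
    (h : Walk E u v t) : ∃ t' l, PWalk E u v t' l ∧ l.Nodup ∧ t' ⊆ t := by
  induction h with
  | nil v => exact ⟨_, _, PWalk.nil v, by simp, List.Subset.refl _⟩
  | @cons u v w b t e h ih =>
    obtain ⟨t', l, h1, h2, h3⟩ := ih
    by_cases hu : u ∈ l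
    · obtain ⟨t'', l', h4, h5, h6⟩ := h1.suffix hu
      exact ⟨t'', l', h4, h2.sublist h5.sublist, fun y hy => List.mem_cons_of_mem _ (h3 (h6 hy))⟩
    · exact ⟨_, _, PWalk.cons e h1, List.nodup_cons.2 ⟨hu, h2⟩, List.cons_subset_cons _ h3⟩

theorem Walk.short {V B : Type*} [Fintype V] {E : V → B → V → Prop} {u v : V} {t : List B}
    (h : Walk E u v t) : ∃ t', Walk E u v t' ∧ t'.length + 1 ≤ Fintype.card V ∧ t' ⊆ t := by
  obtain ⟨t', l, h1, h2, h3⟩ := h.toPath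
  exact ⟨t', h1.toWalk.1, h1.toWalk.2 ▸ h2.length_le_card, h3⟩

theorem Walk.append {V B : Type*} {E : V → B → V → Prop} {u v w : V} {p s : List B}
    (h : Walk E u v p) (h' : Walk E v w s) : Walk E u w (p ++ s) := by
  induction h with
  | nil v => exact h'
  | cons e _ ih => exact Walk.cons e (ih h')

theorem Walk.split {V B : Type*} {E : V → B → V → Prop} {u w : V} (p : List B) {s : List B}
    (h : Walk E u w (p ++ s)) : ∃ v, Walk E u v p ∧ Walk E v w s := by
  induction p generalizing u with
  | nil => exact ⟨u, Walk.nil u, h⟩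
  | cons b p ih =>
    cases h with
    | cons e h =>
      obtain ⟨v, h1, h2⟩ := ih h
      exact ⟨v, Walk.cons e h1, h2⟩

theorem lruAccess_inv {B : Type*} [DecidableEq B] (N : ℕ) (w : List B) (a : B)
    (h : w.Nodup ∧ w.length ≤ max N 1) :
    (lruAccess N w a).Nodup ∧ (lruAccess N w a).length ≤ max N 1 := by
  obtain ⟨h1, h2⟩ := h
  unfold lruAccess
  split_ifs with h3 h4
  · refine ⟨?_, ?_⟩
    · rw [List.nodup_append]
      refine ⟨h1.erase a, by simp, ?_⟩
      intro y hy z hz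
      obtain rfl : z = a := by simpa using hz
      exact (h1.mem_erase_iff.1 hy).1
    · have := List.length_pos_of_mem h3
      simp only [List.length_append, List.length_erase_of_mem h3, List.length_singleton]
      omega
  · refine ⟨?_, by simp only [List.length_append, List.length_singleton]; omega⟩
    rw [List.nodup_append]
    refine ⟨h1, by simp, ?_⟩
    intro y hy z hz
    obtain rfl : z = a := by simpa using hz
    rintro rfl; exact h3 hy
  · refine ⟨?_, by simp only [List.length_append, List.length_singleton, List.length_tail]; omega⟩
    rw [List.nodup_append]
    refine ⟨h1.tail, by simp, ?_⟩
    intro y hy z hz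
    obtain rfl : z = a := by simpa using hz
    rintro rfl; exact h3 (List.mem_of_mem_tail hy)

theorem lruRun_append {B : Type*} [DecidableEq B] (N : ℕ) (w s t : List B) :
    lruRun N w (s ++ t) = lruRun N (lruRun N w s) t := by
  simp [lruRun]

theorem lruRun_inv {B : Type*} [DecidableEq B] (N : ℕ) (t w : List B)
    (h : w.Nodup ∧ w.length ≤ max N 1) :
    (lruRun N w t).Nodup ∧ (lruRun N w t).length ≤ max N 1 := by
  induction t generalizing w with
  | nil => exact h
  | cons a t ih => exact ih _ (lruAccess_inv N w a h)

theorem lruAccess_last {B : Type*} [DecidableEq B] (N : ℕ) (w : List B) (a : B) :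
    ∃ q, lruAccess N w a = q ++ [a] := by
  unfold lruAccess
  split_ifs <;> exact ⟨_, rfl⟩

theorem lru_step {B : Type*} [DecidableEq B] (N : ℕ) (q r : List B) (x a : B) (s : Finset B)
    (hax : a ≠ x) (hn : (q ++ x :: r).Nodup) (hl : (q ++ x :: r).length ≤ max N 1)
    (hr : r.toFinset = s) :
    (∃ q' r', lruAccess N (q ++ x :: r) a = q' ++ x :: r' ∧ r'.toFinset = insert a s) ∨
    (x ∉ lruAccess N (q ++ x :: r) a ∧ max N 1 ≤ (insert a s).card) := by
  have hxr : x ∉ r := by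
    have := (List.nodup_append.1 hn).2.1
    exact (List.nodup_cons.1 this).1
  have hrn : r.Nodup := ((List.nodup_append.1 hn).2.1).of_cons
  unfold lruAccess
  split_ifs with h1 h2
  · left
    by_cases hq : a ∈ q
    · refine ⟨q.erase a, r ++ [a], ?_, ?_⟩
      · rw [List.erase_append_left _ hq]; simp
      · ext y; simp [← hr]
    · refine ⟨q, r.erase a ++ [a], ?_, ?_⟩
      · rw [List.erase_append_right _ hq, List.erase_cons_tail (by simpa using hax.symm)]; simp
      · ext y
        simp [← hr, hrn.mem_erase_iff]; tauto
  · left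
    refine ⟨q, r ++ [a], by simp, ?_⟩
    ext y; simp [← hr]
  · cases q with
    | cons b q =>
      left
      refine ⟨q, r ++ [a], by simp, ?_⟩
      ext y; simp [← hr]
    | nil =>
      right
      simp only [List.nil_append, List.mem_cons, not_or] at h1
      refine ⟨by simp [hxr, hax.symm], ?_⟩
      rw [Finset.card_insert_of_notMem (by rw [← hr]; simpa using h1.2), ← hr,
        List.toFinset_card_of_nodup hrn]
      simp at h2
      omega

theorem lru_main {B : Type*} [DecidableEq B] (N : ℕ) (q : List B) (x : B) (s : List B)
    (hn : (q ++ [x]).Nodup) (hl : (q ++ [x]).length ≤ max N 1) (hxs : x ∉ s) :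
    (∃ q' r', lruRun N (q ++ [x]) s = q' ++ x :: r' ∧ r'.toFinset = s.toFinset) ∨
    (x ∉ lruRun N (q ++ [x]) s ∧ max N 1 ≤ s.toFinset.card) := by
  induction s using List.reverseRecOn with
  | nil => exact Or.inl ⟨q, [], rfl, rfl⟩
  | append_singleton s a ih =>
    simp only [List.mem_append, List.mem_singleton, not_or] at hxs
    have hins : (s ++ [a]).toFinset = insert a s.toFinset := by ext y; simp
    have hstep : lruRun N (q ++ [x]) (s ++ [a]) = lruAccess N (lruRun N (q ++ [x]) s) a := by
      simp [lruRun]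
    rw [hins, hstep]
    have hinv := lruRun_inv N s (q ++ [x]) ⟨hn, hl⟩
    rcases ih hxs.1 with ⟨q', r', h1, h2⟩ | ⟨h1, h2⟩
    · rw [h1] at hinv ⊢
      exact lru_step N q' r' x a _ (fun h => hxs.2 h.symm) hinv.1 hinv.2 h2
    · right
      refine ⟨?_, h2.trans (Finset.card_le_card (Finset.subset_insert _ _))⟩
      intro hx
      unfold lruAccess at hx
      split_ifs at hx <;> rcases List.mem_append.1 hx with h | h
      · exact h1 (List.mem_of_mem_erase h)
      · exact hxs.2 (by simpa using h)
      · exact h1 h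
      · exact hxs.2 (by simpa using h)
      · exact h1 (List.mem_of_mem_tail h)
      · exact hxs.2 (by simpa using h)

theorem lru_hit_iff {B : Type*} [DecidableEq B] (N : ℕ) (x : B) (p s : List B) (hxs : x ∉ s) :
    x ∈ lruRun N [] (p ++ x :: s) ↔ s.toFinset.card < max N 1 := by
  have e : lruRun N [] (p ++ x :: s) = lruRun N (lruAccess N (lruRun N [] p) x) s := by
    simp [lruRun]
  obtain ⟨q, hq⟩ := lruAccess_last N (lruRun N [] p) x
  have hinv := lruAccess_inv N _ x (lruRun_inv N p [] (by simp))
  have hinv2 := lruRun_inv N s _ hinv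
  rw [e]
  rw [hq] at hinv hinv2 ⊢
  rcases lru_main N q x s hinv.1 hinv.2 hxs with ⟨q', r', h1, h2⟩ | ⟨h1, h2⟩
  · rw [h1] at hinv2 ⊢
    have := List.toFinset_card_le r'
    have h3 := hinv2.2
    rw [List.length_append, List.length_cons] at h3
    rw [← h2]
    exact ⟨fun _ => by omega, fun _ => by simp⟩
  · exact ⟨fun h => absurd h h1, fun h => by omega⟩

theorem lruRun_mem {B : Type*} [DecidableEq B] (N : ℕ) (x : B) (t w : List B)
    (h : x ∈ lruRun N w t) : x ∈ w ∨ x ∈ t := by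
  induction t generalizing w with
  | nil => exact Or.inl h
  | cons a t ih =>
    rcases ih _ h with h | h
    · unfold lruAccess at h
      split_ifs at h <;> rcases List.mem_append.1 h with h | h
      · exact Or.inl (List.mem_of_mem_erase h)
      · right; simp at h; simp [h]
      · exact Or.inl h
      · right; simp at h; simp [h]
      · exact Or.inl (List.mem_of_mem_tail h)
      · right; simp at h; simp [h]
    · exact Or.inr (List.mem_cons_of_mem _ h)

theorem last_occ {B : Type*} (x : B) (t : List B) (h : x ∈ t) :
    ∃ p s, t = p ++ x :: s ∧ x ∉ s := by
  induction t with
  | nil => simp at h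
  | cons a t ih =>
    by_cases hx : x ∈ t
    · obtain ⟨p, s, h1, h2⟩ := ih hx
      exact ⟨a :: p, s, by simp [h1], h2⟩
    · rcases List.mem_cons.1 h with rfl | h
      · exact ⟨[], t, rfl, hx⟩
      · exact absurd h hx


/-- if some walk from `S` to `F` leaves `x` in the LRU cache
(starting from the empty cache), then some walk of length at most
`2 * Fintype.card V` does, so LRU exist-hit is in NP even for cyclic
control-flow graphs. -/
theorem lru_exist_hit_short_witness {V B : Type*} [Fintype V] [DecidableEq B]
    (E : V → B → V → Prop) (S F : V) (N : ℕ) (x : B) (t : List B)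
    (hwalk : Walk E S F t) (hx : x ∈ lruRun N ([] : List B) t) :
    ∃ t' : List B, Walk E S F t' ∧ t'.length ≤ 2 * Fintype.card V ∧
      x ∈ lruRun N ([] : List B) t' := by
  obtain ⟨p, s, rfl, hxs⟩ := last_occ x t (by simpa using lruRun_mem N x t [] hx)
  rw [lru_hit_iff N x p s hxs] at hx
  obtain ⟨u, h1, h2⟩ := hwalk.split p
  cases h2 with
  | cons e h2 =>
    obtain ⟨p', hp1, hp2, hp3⟩ := h1.short
    obtain ⟨s', hs1, hs2, hs3⟩ := h2.short
    refine ⟨p' ++ x :: s', hp1.append (Walk.cons e hs1), ?_, ?_⟩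
    · simp only [List.length_append, List.length_cons]; omega
    · rw [lru_hit_iff N x p' s' (fun h => hxs (hs3 h))]
      refine lt_of_le_of_lt (Finset.card_le_card ?_) hx
      intro y hy
      simp only [List.mem_toFinset] at hy ⊢
      exact hs3 hy
end

section
/- Let n ≥ 1 and let E' : Fin n → Fin n → Prop be a directed graph. Work over the block type consisting of a distinguished block X and blocks Node(u) for u : Fin n. Then the following are equivalent: (1) there is a Hamiltonian circuit through vertex 0, i.e. a sequence v : Fin (n+1) → Fin n with v 0 = 0, v n = 0, E' (v j) (v (j+1)) for all j < n, and j ↦ v j injective on {1, …, n}; (2) there is a sequence v : Fin (n+1) → Fin n with v 0 = 0, v n = 0 and E' (v j) (v (j+1)) for all j < n, such that X ∉ lruRun n [] (X :: List.ofFn (fun j : Fin n => Node (v (j+1)))). (This is the correctness of the reduction from the Hamiltonian circuit problem to the LRU exist-miss problem: the sequences in (2) are exactly the walks from v₀⁰ to v₀ⁿ through the layered control-flow graph, prefixed by the access to X.) -/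
theorem lru_stay {B : Type*} [DecidableEq B] (N : ℕ) (x : B) (l : List B) :
    ∀ w : List B, x ∉ l → 1 + w.length + l.length ≤ N → x ∈ lruRun N (x :: w) l := by
  induction l with
  | nil => intro w _ _; simp [lruRun]
  | cons a l ih =>
    intro w hx hN
    simp only [List.mem_cons, not_or] at hx
    obtain ⟨hxa, hxl⟩ := hx
    simp only [List.length_cons] at hN
    change x ∈ lruRun N (lruAccess N (x :: w) a) l
    by_cases ha : a ∈ w
    · have h1 : lruAccess N (x :: w) a = x :: (w.erase a ++ [a]) := by
        simp [lruAccess, ha, List.erase_cons, hxa]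
      rw [h1]
      apply ih _ hxl
      have := List.length_erase_of_mem ha
      have := List.length_pos_of_mem ha
      simp only [List.length_append, List.length_singleton]
      omega
    · have h1 : lruAccess N (x :: w) a = x :: (w ++ [a]) := by
        have h2 : w.length + 1 < N := by omega
        simp [lruAccess, ha, Ne.symm hxa, h2]
      rw [h1]
      apply ih _ hxl
      simp only [List.length_append, List.length_singleton]
      omega

theorem lru_iff {B : Type*} [DecidableEq B] (N : ℕ) (x : B) (l : List B) :
    ∀ w : List B, x ∉ w → x ∉ l → l ≠ [] → w.Nodup → w.length + l.length = N →
      (x ∉ lruRun N (x :: w) l ↔ (w ++ l).Nodup) := by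
  induction l with
  | nil => intro w _ _ h; exact absurd rfl h
  | cons a l ih =>
    intro w hxw hx _ hw hN
    simp only [List.mem_cons, not_or] at hx
    obtain ⟨hxa, hxl⟩ := hx
    simp only [List.length_cons] at hN
    change x ∉ lruRun N (lruAccess N (x :: w) a) l ↔ _
    by_cases ha : a ∈ w
    · have h1 : lruAccess N (x :: w) a = x :: (w.erase a ++ [a]) := by
        simp [lruAccess, ha, List.erase_cons, hxa]
      rw [h1]
      have h2 : x ∈ lruRun N (x :: (w.erase a ++ [a])) l := by
        apply lru_stay _ _ _ _ hxl
        have := List.length_erase_of_mem ha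
        have := List.length_pos_of_mem ha
        simp only [List.length_append, List.length_singleton]
        omega
      refine ⟨fun h => absurd h2 h, fun h => ?_⟩
      exact absurd rfl ((List.nodup_append.1 h).2.2 a ha a List.mem_cons_self)
    · have hwa : (w ++ [a]).Nodup := by
        rw [List.nodup_append]
        refine ⟨hw, List.nodup_singleton a, ?_⟩
        intro b hb c hc hbc
        rw [List.mem_singleton] at hc
        subst hbc hc
        exact ha hb
      by_cases hl : l = []
      · subst hl
        have h1 : lruAccess N (x :: w) a = w ++ [a] := by
          have h2 : ¬ (w.length + 1 < N) := by simp at hN; omega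
          simp [lruAccess, ha, Ne.symm hxa, h2]
        rw [h1]
        simp only [hwa, iff_true]
        simp [lruRun, hxw, hxa]
      · have hpos := List.length_pos_iff.2 hl
        have h1 : lruAccess N (x :: w) a = x :: (w ++ [a]) := by
          have h2 : w.length + 1 < N := by omega
          simp [lruAccess, ha, Ne.symm hxa, h2]
        rw [h1, ih (w ++ [a]) (by simp [hxw, hxa]) hxl hl hwa
          (by simp only [List.length_append, List.length_singleton]; omega)]
        simp

/-- correctness of the reduction from the Hamiltonian circuit
problem to the LRU exist-miss problem.  Blocks are `Option (Fin n)`: `none` is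
the distinguished block `X` and `some u` is the block `Node u`. -/
theorem lru_exist_miss_hamiltonian_reduction (n : ℕ) [NeZero n]
    (E' : Fin n → Fin n → Prop) :
    (∃ v : Fin (n + 1) → Fin n, v 0 = 0 ∧ v (Fin.last n) = 0 ∧
      (∀ j : Fin n, E' (v j.castSucc) (v j.succ)) ∧
      Function.Injective fun j : Fin n => v j.succ) ↔
    (∃ v : Fin (n + 1) → Fin n, v 0 = 0 ∧ v (Fin.last n) = 0 ∧
      (∀ j : Fin n, E' (v j.castSucc) (v j.succ)) ∧
      (none : Option (Fin n)) ∉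
        lruRun n ([] : List (Option (Fin n)))
          (none :: List.ofFn fun j : Fin n => some (v j.succ))) := by
  refine exists_congr fun v => and_congr_right fun _ => and_congr_right fun _ =>
    and_congr_right fun _ => ?_
  have hn : n ≠ 0 := NeZero.ne n
  have h0 : lruRun n ([] : List (Option (Fin n)))
      (none :: List.ofFn fun j : Fin n => some (v j.succ)) =
      lruRun n [none] (List.ofFn fun j : Fin n => some (v j.succ)) := by
    have : 0 < n := by omega
    simp [lruRun, lruAccess]
  rw [h0, lru_iff n none _ [] (by simp) (by simp [List.mem_ofFn]) (by simpa using hn)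
    List.nodup_nil (by simp), List.nil_append, List.nodup_ofFn]
  exact ⟨fun h a b hab => h (Option.some.inj hab), fun h a b hab => h (congrArg some hab)⟩
end

section
/- Let N ≥ 1, let w be a legal LRU state (a list of pairwise distinct blocks of length at most N), and let fs be a list of N pairwise distinct blocks none of which occurs in w. Then lruRun N w fs = fs. (Prepending N accesses to fresh pairwise distinct blocks brings an LRU cache from an arbitrary legal initial state to one fixed, completely known state; this reduces LRU analysis problems with arbitrary initial cache state to the same problems with empty initial cache state.) -/
theorem lru_aux {B : Type*} [DecidableEq B] (N : ℕ) (t : List B) :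
    ∀ u p : List B, (u ++ p).length ≤ N → t.Nodup → (p ++ t).length = N →
    (∀ x ∈ t, x ∉ u ++ p) → lruRun N (u ++ p) t = p ++ t := by
  induction t with
  | nil =>
    intro u p h1 _ h2 _
    have : u = [] := by
      apply List.eq_nil_of_length_eq_zero
      simp at h1 h2
      omega
    simp [this, lruRun]
  | cons a t ih =>
    intro u p h1 hn h2 hf
    have ha : a ∉ u ++ p := hf a (by simp)
    have hn' := List.nodup_cons.mp hn
    have key : ∀ v : List B, (v ++ (p ++ [a])).length ≤ N → (∀ x ∈ v, x ∈ u) →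
        lruRun N (v ++ (p ++ [a])) t = p ++ a :: t := by
      intro v hv hvu
      have := ih v (p ++ [a]) hv hn'.2 (by simpa [Nat.add_assoc, Nat.add_comm] using h2) (by
        intro x hx hmem
        have hx' := hf x (List.mem_cons_of_mem _ hx)
        simp only [List.mem_append, List.mem_singleton] at hmem hx'
        rcases hmem with h | h | h
        · exact hx' (Or.inl (hvu x h))
        · exact hx' (Or.inr h)
        · exact hn'.1 (h ▸ hx))
      simpa using this
    change lruRun N (lruAccess N (u ++ p) a) t = _
    unfold lruAccess
    rw [if_neg ha]
    split_ifs with hl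
    · rw [List.append_assoc]
      exact key u (by simp at hl ⊢; omega) (fun _ h => h)
    · cases u with
      | nil => simp at hl h2; omega
      | cons b v =>
        have := key v (by simp at h1 ⊢; omega) (fun _ h => List.mem_cons_of_mem _ h)
        simpa using this

/-- accessing `N` pairwise distinct fresh blocks brings an LRU
cache from any legal state to the fixed, completely known state `fs`. -/
theorem lru_fresh_accesses_reset {B : Type*} [DecidableEq B] (N : ℕ) (hN : 1 ≤ N)
    (w fs : List B) (hw_nodup : w.Nodup) (hw_len : w.length ≤ N)
    (hfs_nodup : fs.Nodup) (hfs_len : fs.length = N)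
    (hfresh : ∀ x ∈ fs, x ∉ w) :
    lruRun N w fs = fs := by
  have := lru_aux N fs w [] (by simpa using hw_len) hfs_nodup (by simpa using hfs_len)
    (by simpa using hfresh)
  simpa using this
end

section
/- Let E = [a(1,false), a(2,false), …, a(r,false), c(1), c(2), …, c(r)]. (i) If w is an NMRU state well-formed at step 0 corresponding to the constant-false valuation, then nmruRun (2r+3) w E has the form c(1)^1 … c(r)^1 d^0 a(τ(1),false)^1 … a(τ(r),false)^1 g₀^0 g₁^1 for some permutation τ of {1,…,r}; in particular the block d belongs to the resulting cache state. (ii) If w is an NMRU state well-phased at step 0 but not well-formed at step 0 corresponding to any valuation, then the block d does not belong to nmruRun (2r+3) w E. (This is the correctness of the epilogue of the reduction from Boolean register machine reachability to the NMRU exist-hit problem.) -/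
/-- Set all MRU-bits to 0 except the one of block `a`. -/
def nmruReset {B : Type*} [DecidableEq B] (a : B) (w : List (B × Bool)) :
    List (B × Bool) :=
  w.map fun p => if p.1 = a then p else (p.1, false)

/-- If all MRU-bits are 1, reset all of them to 0 except the one of `a`. -/
def nmruNormalize {B : Type*} [DecidableEq B] (a : B) (w : List (B × Bool)) :
    List (B × Bool) :=
  if w.all (fun p => p.2) then nmruReset a w else w

/-- Replace the leftmost entry with MRU-bit 0 by `(a, 1)`. -/
def nmruReplace {B : Type*} [DecidableEq B] (a : B) :
    List (B × Bool) → List (B × Bool)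
  | [] => []
  | p :: rest => if p.2 = false then (a, true) :: rest else p :: nmruReplace a rest

/-- One access to an NMRU cache of associativity `N`: on a hit the block's
MRU-bit is set to 1; on a miss `(a,1)` is appended if the cache is not full,
and otherwise the leftmost entry with MRU-bit 0 is replaced by `(a,1)`; if this
would make all `N` MRU-bits equal to 1, all MRU-bits other than `a`'s are set
to 0 instead. -/
def nmruAccess {B : Type*} [DecidableEq B] (N : ℕ) (w : List (B × Bool)) (a : B) :
    List (B × Bool) :=
  if a ∈ w.map Prod.fst then
    nmruNormalize a (w.map fun p => if p.1 = a then (a, true) else p)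
  else if w.length < N then w ++ [(a, true)]
  else nmruNormalize a (nmruReplace a w)

/-- Process a list of accesses in order, starting from state `w`. -/
def nmruRun {B : Type*} [DecidableEq B] (N : ℕ) (w : List (B × Bool)) (t : List B) :
    List (B × Bool) :=
  t.foldl (nmruAccess N) w

/-- Block alphabet of the NMRU reduction: blocks `a(i,b)`, `e(i)`, `c(i)` for
`i : Fin r` (representing indices `1,…,r`), and `d`, `g₀`, `g₁`. -/
inductive NBlk (r : ℕ) where
  | a (i : Fin r) (b : Bool)
  | e (i : Fin r)
  | c (i : Fin r)
  | d
  | g0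
  | g1
  deriving DecidableEq

/-- An NMRU state is well-formed at step `s` (the MRU-bit of `g₀`),
corresponding to `σ`, if it has the form
`e(τ'(1))⁰ … e(τ'(r))⁰ d⁰ a(τ(1),σ(τ(1)))⁰ … a(τ(r),σ(τ(r)))⁰ g₀ˢ g₁^(1-s)`
for some permutations `τ`, `τ'` of `{1,…,r}`. -/
def WellFormedN (r : ℕ) (s : Bool) (σ : Fin r → Bool)
    (w : List (NBlk r × Bool)) : Prop :=
  ∃ τ τ' : Equiv.Perm (Fin r),
    w = (List.ofFn fun i : Fin r => (NBlk.e (τ' i), false)) ++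
        [(NBlk.d, false)] ++
        (List.ofFn fun i : Fin r => (NBlk.a (τ i) (σ (τ i)), false)) ++
        [(NBlk.g0, s), (NBlk.g1, !s)]

/-- An NMRU state is well-phased at step `s` if it has the form
`γ_{ρ(1)}⁰ … γ_{ρ(r)}⁰ d⁰ γ_{ρ(r+1)}⁰ … γ_{ρ(2r)}⁰ g₀ˢ g₁^(1-s)`, where the
`γ`'s are the `r` blocks `e(j)` together with `r` blocks `a(j, b_j)` (one for
each `j`) and `ρ` is a permutation of `{1,…,2r}`. -/
def WellPhasedN (r : ℕ) (s : Bool) (w : List (NBlk r × Bool)) : Prop :=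
  ∃ (b : Fin r → Bool) (l₁ l₂ : List (NBlk r)),
    l₁.length = r ∧ l₂.length = r ∧
    (l₁ ++ l₂).Perm
      ((List.ofFn fun i : Fin r => NBlk.e i) ++
       (List.ofFn fun i : Fin r => NBlk.a i (b i))) ∧
    w = (l₁.map fun x => (x, false)) ++ [(NBlk.d, false)] ++
        (l₂.map fun x => (x, false)) ++ [(NBlk.g0, s), (NBlk.g1, !s)]

/-- The epilogue access sequence `E = a(1,f) … a(r,f) c(1) … c(r)`. -/
def epilogueE (r : ℕ) : List (NBlk r) :=
  (List.ofFn fun i : Fin r => NBlk.a i false) ++ (List.ofFn fun i : Fin r => NBlk.c i)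

section helpers

variable {B : Type*} [DecidableEq B]

/-- number of entries with MRU-bit 0 -/
def zc (w : List (B × Bool)) : ℕ := w.countP (fun p => !p.2)

lemma norm_of_mem {x d : B} {w : List (B × Bool)} (h : (d, false) ∈ w) :
    nmruNormalize x w = w := by
  unfold nmruNormalize
  rw [if_neg]
  intro hh
  rw [List.all_eq_true] at hh
  simpa using hh _ h

lemma keys_norm (x : B) (w : List (B × Bool)) :
    (nmruNormalize x w).map Prod.fst = w.map Prod.fst := by
  unfold nmruNormalize nmruReset
  split
  · rw [List.map_map]
    apply List.map_congr_left
    intro p _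
    simp only [Function.comp]
    split <;> rfl
  · rfl

lemma keys_hit (x : B) (w : List (B × Bool)) :
    (w.map fun p => if p.1 = x then (x, true) else p).map Prod.fst = w.map Prod.fst := by
  rw [List.map_map]
  apply List.map_congr_left
  intro p _
  simp only [Function.comp]
  split <;> simp_all

lemma length_replace (x : B) (w : List (B × Bool)) :
    (nmruReplace x w).length = w.length := by
  induction w with
  | nil => rfl
  | cons p w ih => simp only [nmruReplace]; split <;> simp_all

lemma keys_replace (x y : B) (w : List (B × Bool)) :
    y ∈ (nmruReplace x w).map Prod.fst → y = x ∨ y ∈ w.map Prod.fst := by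
  induction w with
  | nil => simp [nmruReplace]
  | cons p w ih =>
    simp only [nmruReplace]
    split
    · simp only [List.map_cons, List.mem_cons]; tauto
    · simp only [List.map_cons, List.mem_cons]; tauto

lemma length_access {N : ℕ} (x : B) (w : List (B × Bool)) (h : w.length = N) :
    (nmruAccess N w x).length = N := by
  have hn : ∀ v : List (B × Bool), (nmruNormalize x v).length = v.length := fun v => by
    have := congrArg List.length (keys_norm x v); simpa using this
  unfold nmruAccess
  split
  · rw [hn]; simpa using h
  · rw [if_neg (by omega), hn, length_replace, h]

lemma keys_access {N : ℕ} (x y : B) (w : List (B × Bool)) (h : w.length = N) :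
    y ∈ (nmruAccess N w x).map Prod.fst → y = x ∨ y ∈ w.map Prod.fst := by
  unfold nmruAccess
  split
  · rw [keys_norm, keys_hit]; exact Or.inr
  · rw [if_neg (by omega), keys_norm]; exact keys_replace x y w

lemma length_run {N : ℕ} (t : List B) : ∀ (w : List (B × Bool)), w.length = N →
    (nmruRun N w t).length = N := by
  induction t with
  | nil => intro w h; exact h
  | cons x t ih => intro w h; exact ih _ (length_access x w h)

lemma keys_run {N : ℕ} (y : B) (t : List B) : ∀ (w : List (B × Bool)), w.length = N →
    y ∈ (nmruRun N w t).map Prod.fst → y ∈ t ∨ y ∈ w.map Prod.fst := by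
  induction t with
  | nil => intro w h hy; exact Or.inr hy
  | cons x t ih =>
    intro w h hy
    rcases ih _ (length_access x w h) hy with h1 | h1
    · simp [h1]
    · rcases keys_access x y w h h1 with h2 | h2
      · simp [h2]
      · exact Or.inr h2

lemma replace_append_zero (x d : B) (L R : List (B × Bool)) (h : zc L = 0) :
    nmruReplace x (L ++ (d, false) :: R) = L ++ (x, true) :: R := by
  induction L with
  | nil => simp [nmruReplace]
  | cons p L ih =>
    obtain ⟨k, b⟩ := p
    cases b <;> simp_all [zc, nmruReplace]

lemma replace_append_pos (x : B) (L R : List (B × Bool)) (h : 0 < zc L) :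
    nmruReplace x (L ++ R) = nmruReplace x L ++ R ∧ zc (nmruReplace x L) + 1 = zc L := by
  induction L with
  | nil => simp [zc] at h
  | cons p L ih =>
    obtain ⟨k, b⟩ := p
    cases b
    · simp [zc, nmruReplace]
    · have := ih (by simpa [zc] using h)
      simpa [zc, nmruReplace] using this

lemma access_hit {N : ℕ} {x d : B} {w : List (B × Bool)} (hx : x ∈ w.map Prod.fst)
    (hd : (d, false) ∈ w) (hxd : d ≠ x) :
    nmruAccess N w x = w.map fun p => if p.1 = x then (x, true) else p := by
  unfold nmruAccess
  rw [if_pos hx, norm_of_mem (d := d)]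
  rw [List.mem_map]
  exact ⟨_, hd, by simp [hxd]⟩

lemma map_hit_id {x : B} {w : List (B × Bool)} (hx : x ∉ w.map Prod.fst) :
    (w.map fun p => if p.1 = x then (x, true) else p) = w := by
  conv_rhs => rw [← List.map_id w]
  apply List.map_congr_left
  intro p hp
  rw [if_neg]
  · rfl
  · rintro rfl
    exact hx (List.mem_map_of_mem hp)

lemma zc_hit_le (x : B) (w : List (B × Bool)) :
    zc (w.map fun p => if p.1 = x then (x, true) else p) ≤ zc w := by
  induction w with
  | nil => simp
  | cons p w ih =>
    obtain ⟨k, b⟩ := p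
    by_cases hk : k = x <;> cases b <;> simp_all [zc, List.countP_cons] <;> omega

lemma zc_hit_lt {x : B} {l : List B} (hx : x ∈ l) :
    zc ((l.map fun y => (y, false)).map fun p => if p.1 = x then (x, true) else p) < l.length := by
  induction l with
  | nil => simp at hx
  | cons y l ih =>
    have h2 := zc_hit_le x (l.map fun y => (y, false))
    have h3 : zc (l.map fun y => (y, false)) ≤ l.length := by
      unfold zc; refine List.countP_le_length.trans (by simp)
    by_cases hk : y = x
    · simp_all [zc, List.countP_cons]; omega
    · have : x ∈ l := by simp_all [eq_comm]
      have := ih this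
      simp_all [zc, List.countP_cons]

/-- the state has lost `d`, or has `d` with bit 0 and at most `n` zero bits to its left -/
def DInv (d : B) (n : ℕ) (w : List (B × Bool)) : Prop :=
  d ∉ w.map Prod.fst ∨ ∃ L R, w = L ++ (d, false) :: R ∧ d ∉ L.map Prod.fst ∧
    d ∉ R.map Prod.fst ∧ zc L ≤ n

lemma miss_gone {N : ℕ} {x d : B} {L R : List (B × Bool)} (hxd : d ≠ x)
    (hN : (L ++ (d, false) :: R).length = N)
    (hL : d ∉ L.map Prod.fst) (hR : d ∉ R.map Prod.fst)
    (hx : x ∉ (L ++ (d, false) :: R).map Prod.fst) (hz : zc L = 0) :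
    d ∉ (nmruAccess N (L ++ (d, false) :: R) x).map Prod.fst := by
  unfold nmruAccess
  rw [if_neg hx, if_neg (by omega), keys_norm, replace_append_zero _ _ _ _ hz]
  simp only [List.map_append, List.map_cons, List.mem_append, List.mem_cons]
  tauto

lemma miss_pos {N : ℕ} {x d : B} {L R : List (B × Bool)}
    (hN : (L ++ (d, false) :: R).length = N)
    (hx : x ∉ (L ++ (d, false) :: R).map Prod.fst) (hz : 0 < zc L) :
    nmruAccess N (L ++ (d, false) :: R) x = nmruReplace x L ++ (d, false) :: R := by
  unfold nmruAccess
  rw [if_neg hx, if_neg (by omega), (replace_append_pos x L _ hz).1, norm_of_mem (d := d)]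
  simp

lemma inv_miss {N n : ℕ} {x d : B} {L R : List (B × Bool)} (hxd : d ≠ x)
    (hN : (L ++ (d, false) :: R).length = N)
    (hL : d ∉ L.map Prod.fst) (hR : d ∉ R.map Prod.fst)
    (hx : x ∉ (L ++ (d, false) :: R).map Prod.fst) (hz : zc L ≤ n + 1) :
    DInv d n (nmruAccess N (L ++ (d, false) :: R) x) := by
  rcases Nat.eq_zero_or_pos (zc L) with h0 | h0
  · exact Or.inl (miss_gone hxd hN hL hR hx h0)
  · refine Or.inr ⟨_, R, miss_pos hN hx h0, ?_, hR, ?_⟩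
    · intro h
      rcases keys_replace _ _ _ h with h | h
      · exact hxd h
      · exact hL h
    · have := (replace_append_pos x L [] h0).2
      omega

lemma hit_split {N : ℕ} {x d : B} {L R : List (B × Bool)} (hxd : d ≠ x)
    (hx : x ∈ (L ++ (d, false) :: R).map Prod.fst) :
    nmruAccess N (L ++ (d, false) :: R) x =
      (L.map fun p => if p.1 = x then (x, true) else p) ++ (d, false) ::
      (R.map fun p => if p.1 = x then (x, true) else p) := by
  rw [access_hit hx (d := d) (by simp) hxd]
  simp [hxd]

lemma inv_access {N n : ℕ} {x d : B} {w : List (B × Bool)} (hxd : d ≠ x) (hN : w.length = N)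
    (h : DInv d n w) : DInv d n (nmruAccess N w x) := by
  rcases h with h | ⟨L, R, rfl, hL, hR, hz⟩
  · left
    intro hh
    rcases keys_access _ _ _ hN hh with h1 | h1
    · exact hxd h1
    · exact h h1
  · by_cases hx : x ∈ (L ++ (d, false) :: R).map Prod.fst
    · rw [hit_split hxd hx]
      refine Or.inr ⟨_, _, rfl, ?_, ?_, (zc_hit_le _ _).trans hz⟩
      · rwa [keys_hit]
      · rwa [keys_hit]
    · exact inv_miss hxd hN hL hR hx (by omega)

lemma inv_run {N n : ℕ} {d : B} (t : List B) : ∀ {w : List (B × Bool)}, d ∉ t → w.length = N →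
    DInv d n w → DInv d n (nmruRun N w t) := by
  induction t with
  | nil => intro w _ _ h; exact h
  | cons x t ih =>
    intro w hd hN h
    simp only [List.mem_cons, not_or] at hd
    exact ih hd.2 (length_access x w hN) (inv_access hd.1 hN h)

lemma gone_run {N : ℕ} {d : B} (t : List B) {w : List (B × Bool)} (hd : d ∉ t) (hN : w.length = N)
    (h : d ∉ w.map Prod.fst) : d ∉ (nmruRun N w t).map Prod.fst := by
  intro hh
  rcases keys_run _ _ _ hN hh with h1 | h1
  · exact hd h1
  · exact h h1

/-- sequence of misses evicts `d` -/
lemma misses_evict {N : ℕ} {d : B} (t : List B) : ∀ {n : ℕ} {w : List (B × Bool)}, d ∉ t →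
    w.length = N → t.Nodup → (∀ x ∈ t, x ∉ w.map Prod.fst) → n < t.length → DInv d n w →
    d ∉ (nmruRun N w t).map Prod.fst := by
  induction t with
  | nil => intro n w _ _ _ _ h; simp at h
  | cons x t ih =>
    intro n w hd hN hnd hx hn hI
    rcases hI with h | ⟨L, R, rfl, hL, hR, hz⟩
    · exact gone_run _ hd hN h
    · have hd' := hd
      simp only [List.mem_cons, not_or] at hd
      have hxx := hx x (by simp)
      rcases Nat.eq_zero_or_pos n with h0 | h0
      · exact gone_run t hd.2 (length_access x _ hN)
          (miss_gone hd.1 hN hL hR hxx (by omega))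
      · refine ih (n := n - 1) hd.2 (length_access x _ hN) (List.nodup_cons.1 hnd).2 ?_ ?_
          (inv_miss hd.1 hN hL hR hxx (by omega))
        · intro y hy hh
          rcases keys_access _ _ _ hN hh with h1 | h1
          · subst h1; exact (List.nodup_cons.1 hnd).1 hy
          · exact hx y (by simp [hy]) h1
        · simp only [List.length_cons] at hn; omega

/-- phase 1 in the non-well-formed case, before the critical access -/
lemma phase1 {N : ℕ} {d a : B} {l : List B} (hl : 0 < l.length) (hdl : d ∉ l) (t : List B) :
    ∀ {R : List (B × Bool)}, d ∉ t → (l.map (fun y => (y, false)) ++ (d, false) :: R).length = N →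
    d ∉ R.map Prod.fst → a ∉ R.map Prod.fst → a ∈ t → d ≠ a →
    DInv d (l.length - 1) (nmruRun N (l.map (fun y => (y, false)) ++ (d, false) :: R) t) := by
  induction t with
  | nil => intro R _ _ _ _ h; simp at h
  | cons x t ih =>
    intro R hd hN hR ha hat hda
    have hd' := hd
    simp only [List.mem_cons, not_or] at hd
    have hdl' : d ∉ (l.map (fun y => (y, false))).map Prod.fst := by simpa using hdl
    have hzl : zc (l.map (fun y => (y, false))) ≤ l.length :=
      List.countP_le_length.trans (by simp)
    change DInv d _ (nmruRun N (nmruAccess N _ x) t)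
    by_cases hx : x ∈ (l.map (fun y => (y, false)) ++ (d, false) :: R).map Prod.fst
    · by_cases hxl : x ∈ l
      · refine inv_run t hd.2 (length_access x _ hN) ?_
        rw [hit_split hd.1 hx]
        refine Or.inr ⟨_, _, rfl, ?_, ?_, ?_⟩
        · rwa [keys_hit]
        · rwa [keys_hit]
        · have := zc_hit_lt hxl; omega
      · have hxa : a ≠ x := by
          rintro rfl
          simp only [List.map_append, List.map_cons, List.mem_append, List.mem_cons] at hx
          rcases hx with h | h | h
          · simp at h; exact hxl h
          · exact hda h.symm
          · exact ha h
        have hlen := length_access x _ hN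
        rw [hit_split hd.1 hx, map_hit_id (by simpa using hxl)] at hlen ⊢
        refine ih hd.2 hlen (by rwa [keys_hit]) (by rwa [keys_hit]) ?_ hda
        simpa [hxa] using hat
    · exact inv_run t hd.2 (length_access x _ hN)
        (inv_miss hd.1 hN hdl' hR hx (by omega))

/-- run of hits -/
lemma hits_run {N : ℕ} {d : B} (t : List B) : ∀ {w : List (B × Bool)}, d ∉ t →
    (d, false) ∈ w → (∀ x ∈ t, x ∈ w.map Prod.fst) →
    nmruRun N w t = w.map fun p => if p.1 ∈ t then (p.1, true) else p := by
  induction t with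
  | nil => intro w _ _ _; simp [nmruRun]
  | cons x t ih =>
    intro w hd hw hx
    simp only [List.mem_cons, not_or] at hd
    change nmruRun N (nmruAccess N w x) t = _
    rw [access_hit (hx x (by simp)) hw hd.1, ih hd.2, List.map_map]
    · apply List.map_congr_left
      intro p _
      by_cases h1 : p.1 = x
      · simp only [Function.comp, h1, if_true, List.mem_cons, true_or]; split <;> rfl
      · simp [h1]
    · rw [List.mem_map]; exact ⟨_, hw, by simp [hd.1]⟩
    · intro y hy
      rw [keys_hit]; exact hx y (by simp [hy])

/-- run of misses filling all of the left part -/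
lemma misses_fill {N : ℕ} {d : B} {R : List (B × Bool)} (t : List B) :
    ∀ {P l : List B}, l.length = t.length → t.Nodup →
    (P.map (fun y => (y, true)) ++ (l.map (fun y => (y, false)) ++ (d, false) :: R)).length = N →
    (∀ x ∈ t, x ∉ P ∧ x ∉ l ∧ x ≠ d ∧ x ∉ R.map Prod.fst) →
    nmruRun N (P.map (fun y => (y, true)) ++ (l.map (fun y => (y, false)) ++ (d, false) :: R)) t =
      P.map (fun y => (y, true)) ++ (t.map (fun y => (y, true)) ++ (d, false) :: R) := by
  induction t with
  | nil => intro P l hl _ _ _; simp at hl; subst hl; simp [nmruRun]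
  | cons x t ih =>
    intro P l hl hnd hN hx
    cases l with
    | nil => simp at hl
    | cons y l =>
      have hP : zc (P.map (fun y => (y, true))) = 0 := by simp [zc]
      have hxx := hx x (by simp)
      have h1 : nmruAccess N (P.map (fun y => (y, true)) ++
          ((y :: l).map (fun y => (y, false)) ++ (d, false) :: R)) x =
          (P ++ [x]).map (fun y => (y, true)) ++ (l.map (fun y => (y, false)) ++ (d, false) :: R) := by
        unfold nmruAccess
        rw [if_neg, if_neg (by omega)]
        · rw [List.map_cons, List.cons_append, replace_append_zero _ _ _ _ hP,
            norm_of_mem (d := d) (by simp)]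
          simp
        · have h4 := hxx.2.2.2
          have h2 := hxx.2.1
          simp only [List.mem_cons, not_or] at h2
          simp only [List.map_append, List.map_cons, List.mem_append, List.mem_cons, not_or,
            List.map_map, Function.comp_def, List.map_id']
          exact ⟨hxx.1, ⟨h2.1, h2.2⟩, hxx.2.2.1, h4⟩
      have hlen := length_access x _ hN
      change nmruRun N (nmruAccess N _ x) t = _
      rw [h1] at hlen ⊢
      rw [ih (by simpa using hl) (List.nodup_cons.1 hnd).2 hlen]
      · simp
      · intro z hz
        have hzz := hx z (by simp [hz])
        refine ⟨?_, ?_, hzz.2.2⟩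
        · simp only [List.mem_append, List.mem_singleton, not_or]
          refine ⟨hzz.1, ?_⟩
          rintro rfl
          exact (List.nodup_cons.1 hnd).1 hz
        · have := hzz.2.1
          simp only [List.mem_cons, not_or] at this
          exact this.2

lemma perm_ofFn {r : ℕ} {f : Fin r → B} (hf : Function.Injective f) {l : List B}
    (h : l.Perm (List.ofFn f)) : ∃ τ : Equiv.Perm (Fin r), l = List.ofFn fun i => f (τ i) := by
  have hlen : l.length = r := by simpa using h.length_eq
  subst hlen
  have hmem : ∀ i : Fin l.length, ∃ j, f j = l.get i := fun i => by
    have : l.get i ∈ List.ofFn f := h.subset (List.get_mem _ _)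
    simpa using this
  choose g hg using hmem
  have hnd : l.Nodup := h.nodup_iff.2 (List.nodup_ofFn.2 hf)
  have hinj : Function.Injective g := fun i j hij => by
    have : l.get i = l.get j := by rw [← hg, ← hg, hij]
    exact List.nodup_iff_injective_get.1 hnd this
  refine ⟨Equiv.ofBijective g (Finite.injective_iff_bijective.1 hinj), ?_⟩
  simp only [Equiv.ofBijective_apply, hg]
  exact (List.ofFn_get l).symm

end helpers

/-- correctness of the epilogue of the reduction from Boolean
register machine reachability to the NMRU exist-hit problem (step 0 means that
the MRU-bit of `g₀` is `false`).  (i) On a state well-formed at step 0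
corresponding to the constant-false valuation, `E` produces a state of the form
`c(1)¹ … c(r)¹ d⁰ a(τ(1),f)¹ … a(τ(r),f)¹ g₀⁰ g₁¹`, which contains `d`.
(ii) On a state well-phased at step 0 but not well-formed at step 0
corresponding to any valuation, `E` produces a state not containing `d`. -/
theorem nmru_exist_hit_epilogue (r : ℕ) (hr : 1 ≤ r) (w : List (NBlk r × Bool)) :
    (WellFormedN r false (fun _ => false) w →
      (∃ τ : Equiv.Perm (Fin r),
        nmruRun (2 * r + 3) w (epilogueE r) =
          (List.ofFn fun i : Fin r => (NBlk.c i, true)) ++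
          [(NBlk.d, false)] ++
          (List.ofFn fun i : Fin r => (NBlk.a (τ i) false, true)) ++
          [(NBlk.g0, false), (NBlk.g1, true)]) ∧
      NBlk.d ∈ (nmruRun (2 * r + 3) w (epilogueE r)).map Prod.fst) ∧
    ((WellPhasedN r false w ∧ ∀ σ : Fin r → Bool, ¬ WellFormedN r false σ w) →
      NBlk.d ∉ (nmruRun (2 * r + 3) w (epilogueE r)).map Prod.fst) := by
  have hdE1 : NBlk.d ∉ (List.ofFn fun i : Fin r => NBlk.a i false) := by simp
  have hdE2 : NBlk.d ∉ (List.ofFn fun i : Fin r => (NBlk.c i : NBlk r)) := by simp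
  have hcnd : (List.ofFn fun i : Fin r => (NBlk.c i : NBlk r)).Nodup :=
    List.nodup_ofFn.2 fun i j h => by simpa using h
  have hrun : ∀ w, nmruRun (2 * r + 3) w (epilogueE r) =
      nmruRun (2 * r + 3) (nmruRun (2 * r + 3) w (List.ofFn fun i : Fin r => NBlk.a i false))
        (List.ofFn fun i : Fin r => NBlk.c i) := fun w => by
    simp [nmruRun, epilogueE, List.foldl_append]
  constructor
  · rintro ⟨τ, τ', rfl⟩
    have key : nmruRun (2 * r + 3) ((List.ofFn fun i : Fin r => (NBlk.e (τ' i), false)) ++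
        [(NBlk.d, false)] ++
        (List.ofFn fun i : Fin r => (NBlk.a (τ i) false, false)) ++
        [(NBlk.g0, false), (NBlk.g1, !false)]) (epilogueE r) =
          (List.ofFn fun i : Fin r => (NBlk.c i, true)) ++
          [(NBlk.d, false)] ++
          (List.ofFn fun i : Fin r => (NBlk.a (τ i) false, true)) ++
          [(NBlk.g0, false), (NBlk.g1, true)] := by
      rw [hrun, hits_run (d := NBlk.d) _ hdE1 (by simp)]
      · have h2 := misses_fill (N := 2 * r + 3) (d := NBlk.d)
          (R := (List.ofFn fun i : Fin r => (NBlk.a (τ i) false, true)) ++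
            [(NBlk.g0, false), (NBlk.g1, true)])
          (List.ofFn fun i : Fin r => (NBlk.c i : NBlk r)) (P := [])
          (l := List.ofFn fun i : Fin r => NBlk.e (τ' i)) (by simp) hcnd
          (by simp; omega) (by
            intro x hx
            rw [List.mem_ofFn] at hx
            obtain ⟨i, rfl⟩ := hx
            simp)
        simpa [List.map_ofFn, Function.comp_def] using h2
      · intro x hx
        rw [List.mem_ofFn] at hx
        obtain ⟨i, rfl⟩ := hx
        have : ∃ j, τ j = i := τ.surjective i
        simpa using this
    refine ⟨⟨τ, key⟩, ?_⟩
    rw [key]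
    simp
  · rintro ⟨⟨b, l₁, l₂, h1, h2, hp, rfl⟩, hwf⟩
    have hinjE : Function.Injective (fun i : Fin r => (NBlk.e i : NBlk r)) :=
      fun i j h => by simpa using h
    have hinjA : Function.Injective (fun i : Fin r => (NBlk.a i (b i) : NBlk r)) :=
      fun i j h => by simp at h; exact h.1
    have hnd : (l₁ ++ l₂).Nodup := by
      rw [hp.nodup_iff, List.nodup_append']
      refine ⟨List.nodup_ofFn.2 hinjE, List.nodup_ofFn.2 hinjA, ?_⟩
      intro x hx hy
      rw [List.mem_ofFn] at hx hy
      obtain ⟨i, rfl⟩ := hx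
      obtain ⟨j, hj⟩ := hy
      simp at hj
    have hmem : ∀ x, x ∈ l₁ ∨ x ∈ l₂ → (∃ i, NBlk.e i = x) ∨ ∃ i, NBlk.a i (b i) = x := by
      intro x hx
      have := hp.subset (List.mem_append.2 hx)
      simpa using this
    have hdl : NBlk.d ∉ l₁ := fun h => by simpa using hmem _ (Or.inl h)
    have hdl2 : NBlk.d ∉ l₂ := fun h => by simpa using hmem _ (Or.inr h)
    have hj : ∃ j, NBlk.a j (b j) ∈ l₁ := by
      by_contra hno
      push Not at hno
      have hsub : l₁ ⊆ List.ofFn fun i : Fin r => NBlk.e i := by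
        intro x hx
        rcases hmem x (Or.inl hx) with h | ⟨i, rfl⟩
        · simpa using h
        · exact absurd hx (hno i)
      have hp1 : l₁.Perm (List.ofFn fun i : Fin r => NBlk.e i) :=
        ((List.nodup_append'.1 hnd).1.subperm hsub).perm_of_length_le (by simp [h1])
      have hp2 : l₂.Perm (List.ofFn fun i : Fin r => NBlk.a i (b i)) :=
        (List.perm_append_left_iff _).1 (((hp1.append_right l₂).symm).trans hp)
      obtain ⟨τ', rfl⟩ := perm_ofFn hinjE hp1
      obtain ⟨τ, rfl⟩ := perm_ofFn hinjA hp2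
      exact hwf b ⟨τ, τ', by simp [List.map_ofFn, Function.comp_def]⟩
    obtain ⟨j, hj⟩ := hj
    have hja : NBlk.a j false ∉ l₂ := by
      intro h
      rcases hmem _ (Or.inr h) with ⟨i, hi⟩ | ⟨i, hi⟩
      · simp at hi
      · simp only [NBlk.a.injEq] at hi
        obtain ⟨rfl, hb⟩ := hi
        rw [hb] at hj
        exact (List.nodup_append'.1 hnd).2.2 hj h
    rw [hrun]
    have hw : (l₁.map fun x => (x, false)) ++ [(NBlk.d, false)] ++
        (l₂.map fun x => (x, false)) ++ [(NBlk.g0, false), (NBlk.g1, !false)] =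
        (l₁.map fun x => (x, false)) ++ (NBlk.d, false) ::
        ((l₂.map fun x => (x, false)) ++ [(NBlk.g0, false), (NBlk.g1, true)]) := by simp
    rw [hw]
    have hN : ((l₁.map fun x => (x, false)) ++ (NBlk.d, false) ::
        ((l₂.map fun x => (x, false)) ++ [(NBlk.g0, false), (NBlk.g1, true)])).length
          = 2 * r + 3 := by
      simp [h1, h2]; omega
    refine misses_evict _ (n := l₁.length - 1) hdE2 (length_run _ _ hN) hcnd ?_
      (by simp [h1]; omega)
      (phase1 (a := NBlk.a j false) (by omega) hdl _ hdE1 hN (by simpa using hdl2)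
        (by simpa using hja) (by simp) (by simp))
    intro x hx hh
    rw [List.mem_ofFn] at hx
    obtain ⟨i, rfl⟩ := hx
    have hc1 : NBlk.c i ∉ l₁ := fun h => by simpa using hmem _ (Or.inl h)
    have hc2 : NBlk.c i ∉ l₂ := fun h => by simpa using hmem _ (Or.inr h)
    rcases keys_run _ _ _ hN hh with h | h
    · simp at h
    · simp [hc1, hc2] at h
end
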